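/- Let Γ₁, Γ₂ ⊆ ℕ^r be affine semigroups whose join Γ = Γ₁ ⊔ Γ₂ is defined, and suppose both Γ₁ and Γ₂ have strongly indispensable minimal free resolutions. Let p+q = i = r+s and let b_{p,1} ∈ ℬ_p(Γ₁), b_{q,2} ∈ ℬ_q(Γ₂), b′_{r,1} ∈ ℬ_r(Γ₁), b′_{s,2} ∈ ℬ_s(Γ₂). If (b_{p,1} + b_{q,2}) − (b′_{r,1} + b′_{s,2}) ∈ Γ, then b_{p,1} − b′_{r,1} ∈ Γ₁ and b_{q,2} − b′_{s,2} ∈ Γ₂. -/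

import Mathlib

/-!
Every Betti degree of a minimal free resolution of `K[Γ]` lies in `Γ`. Indeed, a nonzero entry in
the column of the differential belonging to a generator writes the degree of that generator as an
element of `Γ` plus a Betti degree one step lower, and by minimality no column vanishes. Since the
extremal rays of `Γ₁` and `Γ₂` are jointly independent, the rational spans of the two semigroups
meet only in `0`. Writing an element of `Γ₁ ⊔ Γ₂` as `γ₁ + γ₂` with `γₖ ∈ Γₖ`, the relation
`b₁ + b₂ = (γ₁ + γ₂) + (b₁' + b₂')` therefore splits into its two components.
-/

open MvPolynomial

noncomputable section

set_option synthInstance.maxHeartbeats 1000000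
set_option maxHeartbeats 1000000

/-- The affine semigroup of `ℕ^d` generated by `a₁,…,a_n`. -/
def affSemigroup {n d : ℕ} (a : Fin n → Fin d → ℕ) : AddSubmonoid (Fin d → ℕ) :=
  AddSubmonoid.closure (Set.range a)

/-- `v` lies in the rational polyhedral cone generated by `a₁,…,a_n`. -/
def inCone {n d : ℕ} (a : Fin n → Fin d → ℕ) (v : Fin d → ℕ) : Prop :=
  ∃ c : Fin n → ℚ, (∀ i, 0 ≤ c i) ∧ ∀ j, (v j : ℚ) = ∑ i, c i * (a i j : ℚ)

/-- `ℋ(Γ) = (Cone(Γ) \ Γ) ∩ ℕ^d`, the set of holes of the affine semigroup. -/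
def holes {n d : ℕ} (a : Fin n → Fin d → ℕ) : Set (Fin d → ℕ) :=
  {v | inCone a v ∧ v ∉ affSemigroup a}

/-- The pseudo-Frobenius elements of the affine semigroup generated by `a`. -/
def pseudoFrobenius {n d : ℕ} (a : Fin n → Fin d → ℕ) : Set (Fin d → ℕ) :=
  {f | f ∈ holes a ∧ ∀ γ ∈ affSemigroup a, γ ≠ 0 → f + γ ∈ affSemigroup a}

/-- The toric (defining) ideal of the semigroup ring `K[Γ]`: the kernel of
`K[x₁,…,x_n] → K[t₁,…,t_d]`, `x_i ↦ t^{a_i}`. -/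
def toricIdeal (K : Type*) [Field K] {n d : ℕ} (a : Fin n → Fin d → ℕ) :
    Ideal (MvPolynomial (Fin n) K) :=
  RingHom.ker (MvPolynomial.aeval
      (fun i => MvPolynomial.monomial (Finsupp.equivFunOnFinite.symm (a i)) (1 : K)) :
    MvPolynomial (Fin n) K →ₐ[K] MvPolynomial (Fin d) K)

/-- The `Γ`-degree of an exponent vector: `e ↦ Σ eᵢ • aᵢ ∈ ℕ^d`. -/
def gammaDeg {n d : ℕ} (a : Fin n → Fin d → ℕ) (e : Fin n →₀ ℕ) : Fin d → ℕ :=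
  ∑ i, e i • a i

/-- A (finite) minimal `Γ`-graded free resolution of the semigroup ring
`K[Γ] = K[x₁,…,x_n]/I_Γ` over the polynomial ring `R = K[x₁,…,x_n]`:
`⋯ → R^{β₂} → R^{β₁} → R^{β₀} = R → K[Γ] → 0`,
where the `i`-th free module `R^{βᵢ}` has generators of `Γ`-degrees `deg i j`, the
differentials are given by matrices `mat i` whose entries are `Γ`-homogeneous of the
appropriate degrees and lie in the graded maximal ideal (minimality), and the complex
is exact. -/
structure MinFreeRes (K : Type*) [Field K] {n d : ℕ} (a : Fin n → Fin d → ℕ) where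
  /-- the Betti numbers -/
  β : ℕ → ℕ
  β0 : β 0 = 1
  /-- the resolution has finite length -/
  bdd : ∃ N, ∀ i, N ≤ i → β i = 0
  /-- the `Γ`-degrees of the generators (the `i`-Betti `Γ`-degrees) -/
  deg : (i : ℕ) → Fin (β i) → (Fin d → ℕ)
  deg0 : ∀ j, deg 0 j = 0
  /-- the matrix of the differential `R^{β_{i+1}} → R^{βᵢ}`;
  `mat i j j'` is the entry with source generator `j` and target generator `j'` -/
  mat : (i : ℕ) → Fin (β (i + 1)) → Fin (β i) → MvPolynomial (Fin n) K
  /-- the differentials are `Γ`-graded -/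
  homog : ∀ i j j', ∀ e ∈ (mat i j j').support,
    deg (i + 1) j = gammaDeg a e + deg i j'
  /-- minimality: all entries lie in the maximal ideal `(x₁,…,x_n)` -/
  minimal : ∀ i j j', MvPolynomial.coeff 0 (mat i j j') = 0
  /-- exactness at homological degree `0`: the kernel of the augmentation
  `R^{β₀} → K[Γ] = R/I_Γ` is the image of the first differential -/
  exact_zero :
    LinearMap.ker ((toricIdeal K a).mkQ ∘ₗ
        (LinearMap.lsum (MvPolynomial (Fin n) K)
            (fun _ : Fin (β 0) => MvPolynomial (Fin n) K) ℕ)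
          fun _ => LinearMap.id) =
      LinearMap.range (Matrix.mulVecLin (Matrix.of fun j' j => mat 0 j j'))
  /-- exactness at all higher homological degrees -/
  exact_succ : ∀ i,
    LinearMap.ker (Matrix.mulVecLin (Matrix.of fun j' j => mat i j j')) =
      LinearMap.range (Matrix.mulVecLin (Matrix.of fun j' j => mat (i + 1) j j'))

/-- The length (projective dimension of `K[Γ]`) of a minimal free resolution. -/
def MinFreeRes.pd {K : Type*} [Field K] {n d : ℕ} {a : Fin n → Fin d → ℕ}
    (F : MinFreeRes K a) : ℕ :=
  sSup {i | F.β i ≠ 0}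

/-- The multiset `ℬᵢ` of `i`-Betti `Γ`-degrees of a minimal free resolution. -/
def MinFreeRes.Betti {K : Type*} [Field K] {n d : ℕ} {a : Fin n → Fin d → ℕ}
    (F : MinFreeRes K a) (i : ℕ) : Multiset (Fin d → ℕ) :=
  Multiset.map (F.deg i) Finset.univ.val

/-- `Γ` is a maximal projective dimension (MPD) semigroup:
`pd_R K[Γ] = n − 1`, i.e. some (hence any) minimal graded free resolution of `K[Γ]`
has length `n − 1`. -/
def IsMPD (K : Type*) [Field K] {n d : ℕ} (a : Fin n → Fin d → ℕ) : Prop :=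
  ∃ F : MinFreeRes K a, F.pd = n - 1

/-- The strong indispensability condition for a minimal graded free resolution:
`±(b − b′) ∉ Γ` for all `i`-Betti `Γ`-degrees `b, b′ ∈ ℬᵢ(Γ)`, `1 ≤ i ≤ pd(Γ)`. -/
def SIFRCond {K : Type*} [Field K] {n d : ℕ} {a : Fin n → Fin d → ℕ}
    (F : MinFreeRes K a) : Prop :=
  ∀ i, 1 ≤ i → i ≤ F.pd → ∀ j j' : Fin (F.β i), j ≠ j' →
    ∀ γ ∈ affSemigroup a, F.deg i j ≠ γ + F.deg i j'

/-- `Γ` has a strongly indispensable minimal free resolution (SIFR). -/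
def HasSIFR (K : Type*) [Field K] {n d : ℕ} (a : Fin n → Fin d → ℕ) : Prop :=
  ∃ F : MinFreeRes K a, SIFRCond F

section MinimalComplex

open Matrix

/-- If `A` had a zero `j`-th column, the basis vector `e_j` would be a cycle, hence a boundary, but
boundaries have all their coordinates in `I`. -/
theorem col_ne_zero_of_ker_mulVecLin_le_range {R m n p : Type*} [CommSemiring R] [Fintype n]
    [Fintype p] {I : Ideal R} (hI : I ≠ ⊤) {A : Matrix m n R} {B : Matrix n p R}
    (hB : ∀ j k, B j k ∈ I) (hAB : LinearMap.ker A.mulVecLin ≤ LinearMap.range B.mulVecLin)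
    (j : n) : A.col j ≠ 0 := by
  classical
  intro hj
  have hcycle : Pi.single j 1 ∈ LinearMap.ker A.mulVecLin := by
    rw [LinearMap.mem_ker, mulVecLin_apply, mulVec_single_one, hj]
  obtain ⟨w, hw⟩ := hAB hcycle
  have hw_mem : (B *ᵥ w) j ∈ I := sum_mem fun k _ => I.mul_mem_right (w k) (hB j k)
  rw [← mulVecLin_apply, hw, Pi.single_eq_same] at hw_mem
  exact hI ((Ideal.eq_top_iff_one I).2 hw_mem)

end MinimalComplex

section Affine

variable {m n d : ℕ} {a : Fin m → Fin d → ℕ} {b : Fin n → Fin d → ℕ} {v : Fin d → ℕ}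

theorem apply_mem_affSemigroup (a : Fin n → Fin d → ℕ) (i : Fin n) : a i ∈ affSemigroup a :=
  AddSubmonoid.subset_closure (Set.mem_range_self i)

theorem gammaDeg_mem_affSemigroup (a : Fin n → Fin d → ℕ) (e : Fin n →₀ ℕ) :
    gammaDeg a e ∈ affSemigroup a :=
  sum_mem fun i _ => nsmul_mem (apply_mem_affSemigroup a i) _

theorem affSemigroup_append (a : Fin m → Fin d → ℕ) (b : Fin n → Fin d → ℕ) :
    affSemigroup (Fin.append a b) = affSemigroup a ⊔ affSemigroup b := by
  have hrange : Set.range (Fin.append a b) = Set.range a ∪ Set.range b := by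
    rw [← Set.Sum.elim_range, ← Fin.append_comp_sumElim]
    exact (finSumFinEquiv.surjective.range_comp _).symm
  rw [affSemigroup, hrange, AddSubmonoid.closure_union, affSemigroup, affSemigroup]

namespace MinFreeRes

variable {K : Type*} [Field K] (F : MinFreeRes K a)

theorem exists_mat_ne_zero (i : ℕ) (j : Fin (F.β (i + 1))) : ∃ j', F.mat i j j' ≠ 0 :=
  Function.ne_iff.1 <| col_ne_zero_of_ker_mulVecLin_le_range
    (RingHom.ker_ne_top (constantCoeff : MvPolynomial (Fin m) K →+* K))
    (fun j k => F.minimal (i + 1) k j) (F.exact_succ i).le j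

theorem deg_mem_affSemigroup (i : ℕ) (j : Fin (F.β i)) : F.deg i j ∈ affSemigroup a := by
  induction i with
  | zero => exact F.deg0 j ▸ zero_mem _
  | succ i ih =>
    obtain ⟨j', hj'⟩ := F.exists_mat_ne_zero i j
    obtain ⟨e, he⟩ := support_nonempty.2 hj'
    rw [F.homog i j j' e he]
    exact add_mem (gammaDeg_mem_affSemigroup a e) (ih j')

end MinFreeRes

/-- The inclusion `ℕ^d → ℚ^d`, through which semigroup elements are compared in a vector space. -/
def toRatVec (d : ℕ) : (Fin d → ℕ) →+ (Fin d → ℚ) :=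
  (Nat.castAddMonoidHom ℚ).compLeft (Fin d)

theorem toRatVec_injective (d : ℕ) : Function.Injective (toRatVec d) :=
  Nat.cast_injective.comp_left

/-- The linear subspace of `ℚ^d` spanned by `a₁,…,a_n`, equivalently by the affine semigroup they
generate. When the rational spans of two affine semigroups are disjoint, their join is a direct
sum. -/
def ratSpan (a : Fin n → Fin d → ℕ) : Submodule ℚ (Fin d → ℚ) :=
  Submodule.span ℚ (Set.range fun i => toRatVec d (a i))

theorem toRatVec_mem_ratSpan (hv : v ∈ affSemigroup a) : toRatVec d v ∈ ratSpan a := by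
  suffices hle : affSemigroup a ≤ (ratSpan a).toAddSubmonoid.comap (toRatVec d) from hle hv
  exact AddSubmonoid.closure_le.2 <| Set.range_subset_iff.2 fun i =>
    Submodule.subset_span (Set.mem_range_self i)

theorem inCone.toRatVec_mem_ratSpan (hv : inCone a v) : toRatVec d v ∈ ratSpan a := by
  obtain ⟨c, -, hc⟩ := hv
  refine (Submodule.mem_span_range_iff_exists_fun ℚ).2 ⟨c, funext fun j => ?_⟩
  simpa [toRatVec] using (hc j).symm

theorem ratSpan_le_ratSpan_of_inCone (h : ∀ i, inCone b (a i)) : ratSpan a ≤ ratSpan b :=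
  Submodule.span_le.2 <| Set.range_subset_iff.2 fun i => (h i).toRatVec_mem_ratSpan

theorem eq_and_eq_of_add_eq_add_of_disjoint_ratSpan (hab : Disjoint (ratSpan a) (ratSpan b))
    {x x' y y' : Fin d → ℕ} (hx : x ∈ affSemigroup a) (hx' : x' ∈ affSemigroup a)
    (hy : y ∈ affSemigroup b) (hy' : y' ∈ affSemigroup b) (h : x + y = x' + y') :
    x = x' ∧ y = y' := by
  have hsub : (toRatVec d x - toRatVec d x') + (toRatVec d y - toRatVec d y') = 0 := by
    rw [sub_add_sub_comm, ← map_add, ← map_add, h, sub_self]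
  obtain ⟨hxx', hyy'⟩ := Submodule.disjoint_iff_add_eq_zero.1 hab
    (sub_mem (toRatVec_mem_ratSpan hx) (toRatVec_mem_ratSpan hx'))
    (sub_mem (toRatVec_mem_ratSpan hy) (toRatVec_mem_ratSpan hy')) hsub
  exact ⟨toRatVec_injective d (sub_eq_zero.1 hxx'), toRatVec_injective d (sub_eq_zero.1 hyy')⟩

theorem betti_difference_in_join_splits_general {K₁ K₂ : Type*} [Field K₁] [Field K₂]
    (hab : Disjoint (ratSpan a) (ratSpan b)) (F₁ : MinFreeRes K₁ a) (F₂ : MinFreeRes K₂ b)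
    {p p' q q' : ℕ} (j₁ : Fin (F₁.β p)) (j₁' : Fin (F₁.β p')) (j₂ : Fin (F₂.β q))
    (j₂' : Fin (F₂.β q'))
    (hdiff : ∃ γ ∈ affSemigroup (Fin.append a b),
      F₁.deg p j₁ + F₂.deg q j₂ = γ + (F₁.deg p' j₁' + F₂.deg q' j₂')) :
    (∃ γ₁ ∈ affSemigroup a, F₁.deg p j₁ = γ₁ + F₁.deg p' j₁') ∧
      (∃ γ₂ ∈ affSemigroup b, F₂.deg q j₂ = γ₂ + F₂.deg q' j₂') := by
  obtain ⟨γ, hγ, h⟩ := hdiff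
  rw [affSemigroup_append] at hγ
  obtain ⟨γ₁, hγ₁, γ₂, hγ₂, rfl⟩ := AddSubmonoid.mem_sup.1 hγ
  rw [add_add_add_comm] at h
  obtain ⟨h₁, h₂⟩ := eq_and_eq_of_add_eq_add_of_disjoint_ratSpan hab
    (F₁.deg_mem_affSemigroup p j₁) (add_mem hγ₁ (F₁.deg_mem_affSemigroup p' j₁'))
    (F₂.deg_mem_affSemigroup q j₂) (add_mem hγ₂ (F₂.deg_mem_affSemigroup q' j₂')) h
  exact ⟨⟨γ₁, hγ₁, h₁⟩, ⟨γ₂, hγ₂, h₂⟩⟩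

end Affine

theorem betti_difference_in_join_splits
    {K : Type*} [Field K] {r r₁ n₁ r₂ n₂ : ℕ}
    (g₁ : Fin (r₁ + n₁) → Fin r → ℕ) (g₂ : Fin (r₂ + n₂) → Fin r → ℕ)
    -- `Γ₁`, `Γ₂` are minimally generated by `𝒢₁`, `𝒢₂`:
    (hmin₁ : ∀ i, g₁ i ∉ AddSubmonoid.closure (Set.range g₁ \ {g₁ i}))
    (hmin₂ : ∀ i, g₂ i ∉ AddSubmonoid.closure (Set.range g₂ \ {g₂ i}))
    -- the generating sets are disjoint:
    (hdisj : Disjoint (Set.range g₁) (Set.range g₂))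
    -- the first `r₁` (resp. `r₂`) generators are the extremal rays: every element of
    -- `Γ₁` (resp. `Γ₂`) is a non-negative rational combination of them:
    (hray₁ : ∀ v ∈ affSemigroup g₁, ∃ c : Fin r₁ → ℚ, (∀ t, 0 ≤ c t) ∧
      ∀ j, (v j : ℚ) = ∑ t, c t * (g₁ (Fin.castAdd n₁ t) j : ℚ))
    (hray₂ : ∀ v ∈ affSemigroup g₂, ∃ c : Fin r₂ → ℚ, (∀ t, 0 ≤ c t) ∧
      ∀ j, (v j : ℚ) = ∑ t, c t * (g₂ (Fin.castAdd n₂ t) j : ℚ))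
    -- `E_{Γ₁} ∪ E_{Γ₂}` is linearly independent over `ℚ`:
    (hindep : LinearIndependent ℚ
      (Sum.elim (fun t : Fin r₁ => fun j => (g₁ (Fin.castAdd n₁ t) j : ℚ))
        (fun t : Fin r₂ => fun j => (g₂ (Fin.castAdd n₂ t) j : ℚ))))
    -- `Γ₁` and `Γ₂` have strongly indispensable minimal free resolutions `F₁`, `F₂`:
    (F₁ : MinFreeRes K g₁) (F₂ : MinFreeRes K g₂)
    (hS₁ : SIFRCond F₁) (hS₂ : SIFRCond F₂)
    -- Betti `Γ`-degrees `b = b_{p,1} + b_{q,2}` and `b′ = b′_{r,1} + b′_{s,2}` with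
    -- `p + q = i = r + s`:
    (p q rr s i : ℕ) (hpq : p + q = i) (hrs : rr + s = i)
    (jp : Fin (F₁.β p)) (jq : Fin (F₂.β q)) (jr : Fin (F₁.β rr)) (js : Fin (F₂.β s))
    -- if `b − b′ ∈ Γ = Γ₁ ⊔ Γ₂` …
    (hdiff : ∃ γ ∈ affSemigroup (Fin.append g₁ g₂),
      F₁.deg p jp + F₂.deg q jq = γ + (F₁.deg rr jr + F₂.deg s js)) :
    -- … then `b_{p,1} − b′_{r,1} ∈ Γ₁` and `b_{q,2} − b′_{s,2} ∈ Γ₂`: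
    (∃ γ₁ ∈ affSemigroup g₁, F₁.deg p jp = γ₁ + F₁.deg rr jr) ∧
      (∃ γ₂ ∈ affSemigroup g₂, F₂.deg q jq = γ₂ + F₂.deg s js) :=
  betti_difference_in_join_splits_general ((linearIndependent_sum.1 hindep).2.2.mono
    (ratSpan_le_ratSpan_of_inCone fun i => hray₁ _ (apply_mem_affSemigroup g₁ i))
    (ratSpan_le_ratSpan_of_inCone fun i => hray₂ _ (apply_mem_affSemigroup g₂ i)))
    F₁ F₂ jp jr jq js hdiff
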